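/- (Proposition 3.) The function D : ℝ → ℝ defined by D(t₂) = σ₂·φ((μ−t₂)/σ₂)·(1 − F₁) − σ₁·f₁·(1 − Φ((μ−t₂)/σ₂)) attains a strict global maximum at the unique point t₂⁺ = μ − σ₁·f₁/(1 − F₁); that is, D(t₂) < D(t₂⁺) for all t₂ ≠ t₂⁺. -/

import Mathlib

open Real

/-- Density of the standard normal distribution. -/
noncomputable def stdPdf (y : ℝ) : ℝ := (Real.sqrt (2 * Real.pi))⁻¹ * Real.exp (-(y ^ 2) / 2)

/-- Cumulative distribution function of the standard normal distribution. -/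
noncomputable def stdCdf (y : ℝ) : ℝ := ∫ x in Set.Iic y, stdPdf x

/-!
With `y = (μ - t₂) / σ₂`, the advantage is a constant plus `b φ(y) + c Φ(y)`, where
`b = σ₂ (1 - F₁)` and `c = σ₁ f₁`. Since `φ' = -y φ` and `Φ' = φ`, this has derivative
`φ(y) (c - b y)`, and `b > 0` because `Φ < 1`. Hence it strictly increases up to `y = c / b`, which
is `t₂ = t₂⁺`, and strictly decreases afterwards.
-/

open Set MeasureTheory ProbabilityTheory

section Calculus

lemma lt_of_deriv_pos_of_deriv_neg {f : ℝ → ℝ} {m x : ℝ} (hm : ContinuousAt f m)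
    (hpos : ∀ z < m, 0 < deriv f z) (hneg : ∀ z > m, deriv f z < 0) (hx : x ≠ m) :
    f x < f m := by
  have hf : Continuous f := continuous_iff_continuousAt.2 fun z => by
    rcases lt_trichotomy z m with hz | rfl | hz
    · exact (differentiableAt_of_deriv_ne_zero (hpos z hz).ne').continuousAt
    · exact hm
    · exact (differentiableAt_of_deriv_ne_zero (hneg z hz).ne).continuousAt
  rcases hx.lt_or_gt with hlt | hgt
  · have hmono : StrictMonoOn f (Iic m) :=
      strictMonoOn_of_deriv_pos (convex_Iic m) hf.continuousOn (by simpa using hpos)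
    exact hmono hlt.le self_mem_Iic hlt
  · have hanti : StrictAntiOn f (Ici m) :=
      strictAntiOn_of_deriv_neg (convex_Ici m) hf.continuousOn (by simpa using hneg)
    exact hanti self_mem_Ici hgt.le hgt

lemma hasDerivAt_integral_Iic {E : Type*} [NormedAddCommGroup E] [NormedSpace ℝ E]
    [CompleteSpace E] {f : ℝ → E} {y : ℝ} (hf : Integrable f) (hy : ContinuousAt f y) :
    HasDerivAt (fun z => ∫ x in Iic z, f x) (f y) y := by
  have hsplit : (fun z => ∫ x in Iic z, f x) = fun z => (∫ x in Iic y, f x) + ∫ x in y..z, f x := by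
    funext z
    rw [← intervalIntegral.integral_Iic_sub_Iic hf.integrableOn hf.integrableOn,
      add_sub_cancel]
  rw [hsplit]
  exact (intervalIntegral.integral_hasDerivAt_right hf.intervalIntegrable
    hf.aestronglyMeasurable.stronglyMeasurableAtFilter hy).const_add _

lemma setIntegral_lt_integral_of_pos {α : Type*} [MeasurableSpace α] {ν : Measure α} {f : α → ℝ}
    {s : Set α} (hs : MeasurableSet s) (hsc : ν sᶜ ≠ 0) (hf : Integrable f ν)
    (hpos : ∀ x, 0 < f x) : ∫ x in s, f x ∂ν < ∫ x, f x ∂ν := by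
  have hsupp : Function.support f = univ := eq_univ_of_forall fun x => (hpos x).ne'
  have hcompl : 0 < ∫ x in sᶜ, f x ∂ν := by
    rw [setIntegral_pos_iff_support_of_nonneg_ae (ae_of_all _ fun x => (hpos x).le)
      hf.integrableOn, hsupp, univ_inter]
    exact pos_iff_ne_zero.2 hsc
  rw [← integral_add_compl hs hf]
  exact lt_add_of_pos_right _ hcompl

end Calculus

section StandardNormal

lemma stdPdf_eq_gaussianPDFReal : stdPdf = gaussianPDFReal 0 1 := by
  funext y
  simp [stdPdf, gaussianPDFReal]

lemma stdPdf_pos (y : ℝ) : 0 < stdPdf y := by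
  rw [stdPdf_eq_gaussianPDFReal]
  exact gaussianPDFReal_pos 0 1 y one_ne_zero

lemma integrable_stdPdf : Integrable stdPdf := by
  rw [stdPdf_eq_gaussianPDFReal]
  exact integrable_gaussianPDFReal 0 1

lemma integral_stdPdf : ∫ x, stdPdf x = 1 := by
  rw [stdPdf_eq_gaussianPDFReal]
  exact integral_gaussianPDFReal_eq_one 0 one_ne_zero

lemma hasDerivAt_stdPdf (y : ℝ) : HasDerivAt stdPdf (-y * stdPdf y) y := by
  have hexponent : HasDerivAt (fun z : ℝ => -(z ^ 2) / 2) (-y) y :=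
    ((hasDerivAt_pow 2 y).neg.div_const 2).congr_deriv (by ring)
  refine (hexponent.exp.const_mul (√(2 * π))⁻¹).congr_deriv ?_
  rw [stdPdf]
  ring

lemma hasDerivAt_stdCdf (y : ℝ) : HasDerivAt stdCdf (stdPdf y) y :=
  hasDerivAt_integral_Iic integrable_stdPdf (hasDerivAt_stdPdf y).continuousAt

lemma stdCdf_lt_one (y : ℝ) : stdCdf y < 1 := by
  rw [← integral_stdPdf]
  exact setIntegral_lt_integral_of_pos measurableSet_Iic (by simp) integrable_stdPdf stdPdf_pos

lemma hasDerivAt_mul_stdPdf_add_mul_stdCdf (b c y : ℝ) :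
    HasDerivAt (fun z => b * stdPdf z + c * stdCdf z) (stdPdf y * (c - b * y)) y :=
  (((hasDerivAt_stdPdf y).const_mul b).add ((hasDerivAt_stdCdf y).const_mul c)).congr_deriv
    (by ring)

lemma mul_stdPdf_add_mul_stdCdf_lt {b y : ℝ} (hb : 0 < b) (c : ℝ) (hy : y ≠ c / b) :
    b * stdPdf y + c * stdCdf y < b * stdPdf (c / b) + c * stdCdf (c / b) := by
  have hderiv := hasDerivAt_mul_stdPdf_add_mul_stdCdf b c
  refine lt_of_deriv_pos_of_deriv_neg (f := fun z => b * stdPdf z + c * stdCdf z)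
    (hderiv (c / b)).continuousAt (fun z hz => ?_) (fun z hz => ?_) hy
  · rw [(hderiv z).deriv]
    exact mul_pos (stdPdf_pos z) (sub_pos.2 ((lt_div_iff₀' hb).1 hz))
  · rw [(hderiv z).deriv]
    exact mul_neg_of_pos_of_neg (stdPdf_pos z) (sub_neg.2 ((div_lt_iff₀' hb).1 hz))

end StandardNormal

theorem advantage_max_unanimous_rejection_general (μ : ℝ) {σ a : ℝ} (hσ : 0 < σ) (ha : 0 < a)
    (c : ℝ) {t : ℝ} (ht : t ≠ μ - c / a) :
    σ * stdPdf ((μ - t) / σ) * a - c * (1 - stdCdf ((μ - t) / σ)) <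
      σ * stdPdf ((μ - (μ - c / a)) / σ) * a - c * (1 - stdCdf ((μ - (μ - c / a)) / σ)) := by
  have hmax : (μ - (μ - c / a)) / σ = c / (σ * a) := by
    rw [sub_sub_cancel, div_div, mul_comm a]
  have hne : (μ - t) / σ ≠ c / (σ * a) := by
    rwa [← hmax, Ne, div_left_inj' hσ.ne', sub_right_inj]
  rw [hmax]
  linarith [mul_stdPdf_add_mul_stdCdf_lt (mul_pos hσ ha) c hne]

/-- Proposition 3: under the unanimous rejection group rule, the expected advantage
`D(t₂) = σ₂·φ((μ−t₂)/σ₂)·(1 − F₁) − σ₁·f₁·(1 − Φ((μ−t₂)/σ₂))` of a Group 2 member over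
a Group 1 member attains a strict global maximum at the unique point
`t₂⁺ = μ − σ₁·f₁/(1 − F₁)`. -/
theorem advantage_max_unanimous_rejection
    (μ σ : ℝ) (hσ : 0 < σ) (g₁ g₂ : ℕ) (hg₁ : 1 ≤ g₁) (hg₂ : 1 ≤ g₂) (t₁ : ℝ)
    (σ₁ σ₂ : ℝ) (hσ₁ : σ₁ = σ / Real.sqrt g₁) (hσ₂ : σ₂ = σ / Real.sqrt g₂)
    (F₁ f₁ : ℝ) (hF₁ : F₁ = stdCdf ((μ - t₁) / σ₁)) (hf₁ : f₁ = stdPdf ((μ - t₁) / σ₁))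
    (D : ℝ → ℝ)
    (hD : D = fun t₂ => σ₂ * stdPdf ((μ - t₂) / σ₂) * (1 - F₁) -
      σ₁ * f₁ * (1 - stdCdf ((μ - t₂) / σ₂))) :
    ∀ t₂ : ℝ, t₂ ≠ μ - σ₁ * f₁ / (1 - F₁) → D t₂ < D (μ - σ₁ * f₁ / (1 - F₁)) := by
  subst hσ₂ hF₁ hD
  exact fun t₂ => advantage_max_unanimous_rejection_general μ
    (div_pos hσ (sqrt_pos.2 (Nat.cast_pos.2 hg₂))) (sub_pos.2 (stdCdf_lt_one _)) (σ₁ * f₁)
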